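/- Let G be a 2-connected graph of odd order n ≥ 5 with α(G) = α(C_n). Then G ≅ C_n or G ≅ H₁(i₁,…,i_k) for some 1 ≤ i₁ ≤ ⋯ ≤ i_k ≤ (n−3)/2, where H₁(i₁,…,i_k) = C_n + v_{i₁}v_{n−i₁} + ⋯ + v_{i_k}v_{n−i_k}. -/

import Mathlib

open Matrix SimpleGraph

/-- The algebraic connectivity of `G`: the infimum of the Rayleigh quotients of the
Laplacian matrix over nonzero vectors orthogonal to the all-ones vector.  For a graph on
at least two vertices this is the second smallest eigenvalue of the Laplacian. -/
noncomputable def algCon {V : Type*} [Fintype V] [DecidableEq V] (G : SimpleGraph V) : ℝ :=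
  letI := Classical.decRel G.Adj
  sInf { r : ℝ | ∃ x : V → ℝ, x ≠ 0 ∧ (∑ v, x v) = 0 ∧
    r = (x ⬝ᵥ (G.lapMatrix ℝ *ᵥ x)) / (∑ v, (x v) ^ 2) }

/-- A graph is 2-connected if it has at least two vertices and every pair of distinct
vertices is joined by (at least) two internally disjoint paths. -/
def TwoConnected {V : Type*} (G : SimpleGraph V) : Prop :=
  (∃ u v : V, u ≠ v) ∧ ∀ u v : V, u ≠ v → ∃ p q : G.Walk u v, p.IsPath ∧ q.IsPath ∧
    ∀ w, w ∈ p.support → w ∈ q.support → w = u ∨ w = v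

/-- `G` is a θ-graph: it consists of three pairwise internally disjoint paths with common
endpoints `a ≠ b`, which together exhaust all vertices and all edges of `G`. -/
def IsThetaGraph {V : Type*} (G : SimpleGraph V) : Prop :=
  ∃ (a b : V) (p₁ p₂ p₃ : G.Walk a b), a ≠ b ∧ p₁.IsPath ∧ p₂.IsPath ∧ p₃.IsPath ∧
    (∀ w, w ∈ p₁.support → w ∈ p₂.support → w = a ∨ w = b) ∧
    (∀ w, w ∈ p₁.support → w ∈ p₃.support → w = a ∨ w = b) ∧
    (∀ w, w ∈ p₂.support → w ∈ p₃.support → w = a ∨ w = b) ∧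
    (∀ w : V, w ∈ p₁.support ∨ w ∈ p₂.support ∨ w ∈ p₃.support) ∧
    (∀ e, e ∈ G.edgeSet ↔ e ∈ p₁.edges ∨ e ∈ p₂.edges ∨ e ∈ p₃.edges)

/-- The cycle `C_n` on vertices `v₀, …, v_{n-1}` together with the chords
`v_{(f j).1} v_{(f j).2}` for `j = 1, …, k`. -/
def cyclePlusChords (n k : ℕ) (f : Fin k → ℕ × ℕ) : SimpleGraph (Fin n) :=
  SimpleGraph.cycleGraph n ⊔ SimpleGraph.fromEdgeSet
    {e | ∃ (j : Fin k) (a b : Fin n), (a : ℕ) = (f j).1 ∧ (b : ℕ) = (f j).2 ∧ e = s(a, b)}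

/-- `H₁(i₁,…,i_k) = C_n + v_{i₁}v_{n−i₁} + ⋯ + v_{i_k}v_{n−i_k}` (`n` odd); this is also
the graph `H₂(i₁,…,i_k)` when `n` is even. -/
def H12 (n k : ℕ) (i : Fin k → ℕ) : SimpleGraph (Fin n) :=
  cyclePlusChords n k (fun j => (i j, n - i j))

/-- `H₃(i₁,…,i_k) = C_n + v_{i₁}v_{n−i₁−1} + ⋯ + v_{i_k}v_{n−i_k−1}` (`n` even). -/
def H3 (n k : ℕ) (i : Fin k → ℕ) : SimpleGraph (Fin n) :=
  cyclePlusChords n k (fun j => (i j, n - i j - 1))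

open Classical in
noncomputable def en {V : Type*} [Fintype V] (G : SimpleGraph V) (x : V → ℝ) : ℝ :=
  ∑ i, ∑ j, if G.Adj i j then (x i - x j) ^ 2 else 0

lemma quad_eq {V : Type*} [Fintype V] [DecidableEq V] (G : SimpleGraph V) [DecidableRel G.Adj]
    (x : V → ℝ) : x ⬝ᵥ (G.lapMatrix ℝ *ᵥ x) = en G x / 2 := by
  have h := G.lapMatrix_toLinearMap₂' ℝ x
  rw [Matrix.toLinearMap₂'_apply'] at h
  rw [h, en]
  congr 1
  refine Finset.sum_congr rfl fun i _ => Finset.sum_congr rfl fun j _ => ?_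
  congr

lemma en_nonneg {V : Type*} [Fintype V] (G : SimpleGraph V) (x : V → ℝ) : 0 ≤ en G x := by
  unfold en
  refine Finset.sum_nonneg fun i _ => Finset.sum_nonneg fun j _ => ?_
  split_ifs <;> positivity

lemma algCon_eq {V : Type*} [Fintype V] [DecidableEq V] (G : SimpleGraph V) :
    algCon G = sInf { r : ℝ | ∃ x : V → ℝ, x ≠ 0 ∧ (∑ v, x v) = 0 ∧
    r = (en G x / 2) / (∑ v, (x v) ^ 2) } := by
  unfold algCon
  simp only [quad_eq]

lemma sq_sum_pos {V : Type*} [Fintype V] {x : V → ℝ} (hx : x ≠ 0) : 0 < ∑ v, (x v) ^ 2 := by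
  obtain ⟨v, hv⟩ := Function.ne_iff.mp hx
  exact Finset.sum_pos' (fun _ _ => sq_nonneg _) ⟨v, Finset.mem_univ _, by
    have : x v ≠ 0 := hv
    positivity⟩

lemma algCon_le {V : Type*} [Fintype V] [DecidableEq V] (G : SimpleGraph V) (x : V → ℝ)
    (hs : ∑ v, x v = 0) : algCon G * ∑ v, (x v) ^ 2 ≤ en G x / 2 := by
  by_cases hx : x = 0
  · have := en_nonneg G x
    simp only [hx, Pi.zero_apply] at *
    simp; linarith
  · rw [← le_div_iff₀ (sq_sum_pos hx), algCon_eq]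
    apply csInf_le
    · refine ⟨0, ?_⟩
      rintro r ⟨x, _, _, rfl⟩
      have := en_nonneg G x
      positivity
    · exact ⟨x, hx, hs, rfl⟩

lemma en_smul {V : Type*} [Fintype V] (G : SimpleGraph V) (c : ℝ) (x : V → ℝ) :
    en G (c • x) = c ^ 2 * en G x := by
  unfold en
  simp only [Finset.mul_sum]
  refine Finset.sum_congr rfl fun i _ => Finset.sum_congr rfl fun j _ => ?_
  split_ifs
  · simp; ring
  · simp

lemma en_continuous {V : Type*} [Fintype V] (G : SimpleGraph V) : Continuous (en G) := by
  unfold en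
  refine continuous_finsetSum _ fun i _ => continuous_finsetSum _ fun j _ => ?_
  split_ifs <;> fun_prop

lemma exists_min {V : Type*} [Fintype V] [DecidableEq V] (G : SimpleGraph V)
    (hV : ∃ u v : V, u ≠ v) :
    ∃ x : V → ℝ, x ≠ 0 ∧ ∑ v, x v = 0 ∧ en G x / 2 = algCon G * ∑ v, (x v) ^ 2 := by
  set K : Set (V → ℝ) := {x | ∑ v, x v = 0 ∧ ∑ v, (x v) ^ 2 = 1} with hK
  have hnorm : ∀ x : V → ℝ, x ≠ 0 → ∑ v, x v = 0 →
      (Real.sqrt (∑ v, (x v) ^ 2))⁻¹ • x ∈ K := by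
    intro x hx hs
    have hp := sq_sum_pos hx
    refine ⟨?_, ?_⟩
    · simp [← Finset.mul_sum, hs]
    · simp only [Pi.smul_apply, smul_eq_mul, mul_pow, ← Finset.mul_sum, inv_pow]
      rw [Real.sq_sqrt hp.le]
      field_simp
  have hne : K.Nonempty := by
    obtain ⟨u, v, huv⟩ := hV
    refine ⟨_, hnorm (Pi.single u 1 - Pi.single v 1) ?_ ?_⟩
    · intro h
      have := congrFun h u
      simp [huv] at this
    · simp
  have hc : IsCompact K := by
    apply Metric.isCompact_of_isClosed_isBounded
    · apply IsClosed.inter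
      · exact isClosed_eq (by fun_prop) (by fun_prop)
      · exact isClosed_eq (by fun_prop) (by fun_prop)
    · refine (Metric.isBounded_closedBall (x := (0 : V → ℝ)) (r := 1)).subset ?_
      intro x hx
      rw [mem_closedBall_zero_iff, pi_norm_le_iff_of_nonneg zero_le_one]
      intro i
      have h1 : (x i) ^ 2 ≤ 1 := by
        rw [← hx.2]
        exact Finset.single_le_sum (f := fun v => (x v) ^ 2) (fun _ _ => sq_nonneg _)
          (Finset.mem_univ i)
      rw [Real.norm_eq_abs]
      exact (sq_le_one_iff_abs_le_one _).mp h1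
  obtain ⟨x, hxK, hmin⟩ := hc.exists_isMinOn hne (en_continuous G).continuousOn
  have hx0 : x ≠ 0 := by
    rintro rfl
    have := hxK.2
    simp at this
  refine ⟨x, hx0, hxK.1, le_antisymm ?_ (algCon_le G x hxK.1)⟩
  rw [hxK.2, mul_one, algCon_eq]
  apply le_csInf
  · exact ⟨_, x, hx0, hxK.1, rfl⟩
  · rintro r ⟨z, hz, hs, rfl⟩
    have h1 : en G x ≤ _ := hmin (hnorm z hz hs)
    have hp := sq_sum_pos hz
    rw [en_smul, inv_pow, Real.sq_sqrt hp.le] at h1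
    calc en G x / 2 ≤ ((∑ v, (z v) ^ 2)⁻¹ * en G z) / 2 := by linarith
      _ = _ := by field_simp

lemma en_equiv {V W : Type*} [Fintype V] [Fintype W] (G : SimpleGraph V) (H : SimpleGraph W)
    (e : V ≃ W) (h : ∀ u v, H.Adj (e u) (e v) ↔ G.Adj u v) (x : W → ℝ) :
    en H x = en G (x ∘ e) := by
  unfold en
  rw [← e.sum_comp]
  refine Finset.sum_congr rfl fun i _ => ?_
  rw [← e.sum_comp]
  refine Finset.sum_congr rfl fun j _ => ?_
  by_cases hh : G.Adj i j
  · rw [if_pos hh, if_pos ((h i j).2 hh)]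
    rfl
  · rw [if_neg hh, if_neg (fun h' => hh ((h i j).1 h'))]

/-- cut property of 2-connected graphs -/
def CutProp {V : Type*} (G : SimpleGraph V) : Prop :=
  ∀ (A : Set V) (w u v : V), w ∉ A → u ∈ A → v ∉ A → v ≠ w →
    ∃ p q, p ∈ A ∧ q ∉ A ∧ q ≠ w ∧ G.Adj p q

lemma cutProp_of {V : Type*} {G : SimpleGraph V} (h : TwoConnected G) : CutProp G := by
  intro A w u v hw hu hv hvw
  have huv : u ≠ v := fun e => hv (e ▸ hu)
  have huw : u ≠ w := fun e => hw (e ▸ hu)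
  obtain ⟨p, q, -, -, hd⟩ := h.2 u v huv
  have key : ∀ r : G.Walk u v, w ∉ r.support → ∃ p q, p ∈ A ∧ q ∉ A ∧ q ≠ w ∧ G.Adj p q := by
    intro r hr
    obtain ⟨d, hd, h1, h2⟩ := r.exists_boundary_dart A hu hv
    refine ⟨d.fst, d.snd, h1, h2, ?_, d.adj⟩
    rintro rfl
    exact hr (r.dart_snd_mem_support_of_mem_darts hd)
  by_cases hp : w ∈ p.support
  · apply key q
    intro hq
    rcases hd w hp hq with h | h
    · exact huw h.symm
    · exact hvw h.symm
  · exact key p hp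

lemma cutProp_equiv {V W : Type*} {G : SimpleGraph V} {H : SimpleGraph W} (e : V ≃ W)
    (h : ∀ u v, H.Adj (e u) (e v) ↔ G.Adj u v) (hH : CutProp H) : CutProp G := by
  intro A w u v hw hu hv hvw
  obtain ⟨p, q, hp, hq, hqw, ha⟩ := hH (e.symm ⁻¹' A) (e w) (e u) (e v) (by simpa) (by simpa)
    (by simpa) (by simpa)
  refine ⟨e.symm p, e.symm q, hp, hq, ?_, ?_⟩
  · rintro rfl
    simp at hqw
  · rw [← h]; simpa

lemma stationary {V : Type*} [Fintype V] [DecidableEq V] (G : SimpleGraph V)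
    [DecidableRel G.Adj] (α : ℝ) (y : V → ℝ)
    (hs : ∑ v, y v = 0) (he : en G y / 2 = α * ∑ v, (y v) ^ 2)
    (hmin : ∀ z : V → ℝ, ∑ v, z v = 0 → α * ∑ v, (z v) ^ 2 ≤ en G z / 2) (a b : V) :
    (G.lapMatrix ℝ *ᵥ y) a - α * y a = (G.lapMatrix ℝ *ᵥ y) b - α * y b := by
  set w : V → ℝ := Pi.single a 1 - Pi.single b 1 with hw
  set L := G.lapMatrix ℝ with hL
  have hws : ∑ v, w v = 0 := by simp [hw]
  have hsq : ∀ z : V → ℝ, ∑ v, (z v) ^ 2 = z ⬝ᵥ z := by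
    intro z; simp [dotProduct, sq]
  have hsym : y ⬝ᵥ (L *ᵥ w) = w ⬝ᵥ (L *ᵥ y) := by
    rw [dotProduct_comm w, Matrix.dotProduct_mulVec, ← Matrix.mulVec_transpose,
      (G.isSymm_lapMatrix (R := ℝ)).eq]
  have key : ∀ t : ℝ, 0 ≤ (w ⬝ᵥ (L *ᵥ w) - α * (w ⬝ᵥ w)) * (t * t)
      + (2 * (w ⬝ᵥ (L *ᵥ y) - α * (w ⬝ᵥ y))) * t + 0 := by
    intro t
    have h1 := hmin (y + t • w) (by simp [Finset.sum_add_distrib, ← Finset.mul_sum, hs, hws])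
    rw [← quad_eq, hsq] at h1
    rw [← quad_eq, hsq] at he
    simp only [Matrix.mulVec_add, Matrix.mulVec_smul, dotProduct_add, add_dotProduct,
      dotProduct_smul, smul_dotProduct, smul_eq_mul] at h1
    rw [← hL, hsym, dotProduct_comm y w] at h1
    rw [← hL] at he
    nlinarith [h1, he]
  have h2 := discrim_le_zero key
  have h3 : w ⬝ᵥ (L *ᵥ y) - α * (w ⬝ᵥ y) = 0 := by
    unfold discrim at h2
    nlinarith [sq_nonneg (w ⬝ᵥ (L *ᵥ y) - α * (w ⬝ᵥ y))]
  simp [hw, sub_dotProduct] at h3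
  linarith

/-- folded cycle relation -/
def Fr (n a b : ℕ) : Prop := (a = 0 ∧ b = 1) ∨ b = a + 2 ∨ (a + 2 = n ∧ b + 1 = n)

def Fg (n : ℕ) : SimpleGraph (Fin n) where
  Adj p q := p ≠ q ∧ (Fr n p q ∨ Fr n q p)
  symm := ⟨fun _ _ h => ⟨h.1.symm, h.2.symm⟩⟩
  loopless := ⟨fun _ h => h.1 rfl⟩

lemma cyc_adj {n : ℕ} (hn : 5 ≤ n) (u v : Fin n) : (SimpleGraph.cycleGraph n).Adj u v ↔
    (u.val + 1 = v.val ∨ v.val + 1 = u.val ∨ (u.val = 0 ∧ v.val + 1 = n)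
      ∨ (v.val = 0 ∧ u.val + 1 = n)) := by
  rw [SimpleGraph.cycleGraph_adj']
  have hu := u.2
  have hv := v.2
  rcases le_total u v with h | h
  · have h2 : (v - u).val = v.val - u.val := Fin.sub_val_of_le h
    have h' : u.val ≤ v.val := h
    by_cases e : u = v
    · subst e
      rw [h2]
      omega
    · have : u < v := lt_of_le_of_ne h e
      have h3 : (u - v).val = n + u.val - v.val := by
        rw [Fin.coe_sub_iff_lt.2 this]
      have e' : u.val ≠ v.val := fun h => e (Fin.ext h)
      rw [h2, h3]
      omega
  · have h2 : (u - v).val = u.val - v.val := Fin.sub_val_of_le h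
    have h' : v.val ≤ u.val := h
    by_cases e : v = u
    · subst e
      rw [h2]
      omega
    · have : v < u := lt_of_le_of_ne h e
      have h3 : (v - u).val = n + v.val - u.val := by
        rw [Fin.coe_sub_iff_lt.2 this]
      have e' : u.val ≠ v.val := fun h => e (Fin.ext h.symm)
      rw [h2, h3]
      omega

def foldN (n k : ℕ) : ℕ := if 2 * k < n then 2 * k - 1 else 2 * (n - k)

lemma foldN_lt {n k : ℕ} (hodd : Odd n) (hk : k < n) : foldN n k < n := by
  obtain ⟨m, rfl⟩ := hodd
  unfold foldN; split_ifs <;> omega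

lemma foldN_inj {n k l : ℕ} (hodd : Odd n) (hk : k < n) (hl : l < n)
    (h : foldN n k = foldN n l) : k = l := by
  obtain ⟨m, rfl⟩ := hodd
  unfold foldN at h; split_ifs at h <;> omega

noncomputable def foldE (n : ℕ) (hodd : Odd n) : Fin n ≃ Fin n :=
  Equiv.ofBijective (fun k => ⟨foldN n k, foldN_lt hodd k.2⟩)
    (Finite.injective_iff_bijective.1 (fun k l h =>
      Fin.ext (foldN_inj hodd k.2 l.2 (Fin.ext_iff.1 h))))

lemma foldE_val {n : ℕ} (hodd : Odd n) (k : Fin n) : (foldE n hodd k).val = foldN n k := rfl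

lemma fold_adj {n : ℕ} (hodd : Odd n) (hn : 5 ≤ n) (u v : Fin n) :
    (Fg n).Adj (foldE n hodd u) (foldE n hodd v) ↔ (SimpleGraph.cycleGraph n).Adj u v := by
  rw [cyc_adj hn]
  have hu := u.2
  have hv := v.2
  show (_ ≠ _ ∧ (Fr n (foldN n u) (foldN n v) ∨ Fr n (foldN n v) (foldN n u))) ↔ _
  rw [Ne, (foldE n hodd).injective.eq_iff, Fin.ext_iff]
  obtain ⟨m, rfl⟩ := hodd
  unfold Fr foldN
  split_ifs <;> omega

lemma Fg_min {n : ℕ} (hodd : Odd n) (hn : 5 ≤ n) (z : Fin n → ℝ) (hz : ∑ v, z v = 0) :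
    algCon (SimpleGraph.cycleGraph n) * ∑ v, (z v) ^ 2 ≤ en (Fg n) z / 2 := by
  rw [en_equiv _ _ (foldE n hodd) (fold_adj hodd hn)]
  have := algCon_le (SimpleGraph.cycleGraph n) (z ∘ foldE n hodd)
    (by rw [← hz]; exact (foldE n hodd).sum_comp z)
  rwa [show ∑ v, ((z ∘ foldE n hodd) v) ^ 2 = ∑ v, (z v) ^ 2 from
    (foldE n hodd).sum_comp (fun v => (z v) ^ 2)] at this

def loN (a : ℕ) : ℕ := if a = 0 then 1 else a - 2
def hiN (n a : ℕ) : ℕ := if a + 1 = n then n - 2 else min (a + 2) (n - 1)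

/-- extension to ℕ -/
noncomputable def extN {n : ℕ} (y : Fin n → ℝ) (a : ℕ) : ℝ := if h : a < n then y ⟨a, h⟩ else 0

lemma extN_val {n : ℕ} (y : Fin n → ℝ) (a : Fin n) : extN y a = y a := by
  simp [extN]

lemma extN_mk {n : ℕ} (y : Fin n → ℝ) (a : ℕ) (h : a < n) : extN y a = y ⟨a, h⟩ := by
  simp [extN, h]

open Classical in
lemma Fg_lap {n : ℕ} (hn : 5 ≤ n) (y : Fin n → ℝ) (a : ℕ) (ha : a < n) :
    ((Fg n).lapMatrix ℝ *ᵥ y) ⟨a, ha⟩ = 2 * extN y a - (extN y (loN a) + extN y (hiN n a)) := by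
  have hlo : loN a < n := by unfold loN; split_ifs <;> omega
  have hhi : hiN n a < n := by unfold hiN; split_ifs <;> omega
  have hne : (⟨loN a, hlo⟩ : Fin n) ≠ ⟨hiN n a, hhi⟩ := by
    rw [Ne, Fin.ext_iff]; unfold loN hiN; simp only
    split_ifs <;> omega
  have hnb : (Fg n).neighborFinset ⟨a, ha⟩ = {⟨loN a, hlo⟩, ⟨hiN n a, hhi⟩} := by
    ext ⟨b, hb⟩
    simp only [mem_neighborFinset, Finset.mem_insert, Finset.mem_singleton, Fin.ext_iff]
    show (_ ≠ _ ∧ (Fr n a b ∨ Fr n b a)) ↔ _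
    rw [Ne, Fin.ext_iff]
    unfold Fr loN hiN; simp only
    split_ifs <;> omega
  rw [SimpleGraph.lapMatrix_mulVec_apply, ← SimpleGraph.card_neighborFinset_eq_degree, hnb,
    Finset.card_pair hne, Finset.sum_pair hne, extN_mk y a ha, extN_mk y _ hlo, extN_mk y _ hhi]
  norm_num

/-- gap -/
noncomputable def gap {n : ℕ} (y : Fin n → ℝ) (g : ℕ) : ℝ := extN y (g + 1) - extN y g

lemma gap_nonneg {n : ℕ} {y : Fin n → ℝ} (hy : Monotone y) {g : ℕ} (hg : g + 1 < n) :
    0 ≤ gap y g := by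
  unfold gap
  rw [extN_mk y _ hg, extN_mk y g (by omega), sub_nonneg]
  exact hy (by simp)

lemma gap_step {n : ℕ} (hn : 5 ≤ n) (α : ℝ) (y : Fin n → ℝ) (hy : Monotone y)
    (hs : ∑ v, y v = 0) (he : en (Fg n) y / 2 = α * ∑ v, (y v) ^ 2)
    (hmin : ∀ z : Fin n → ℝ, ∑ v, z v = 0 → α * ∑ v, (z v) ^ 2 ≤ en (Fg n) z / 2)
    (j : ℕ) (hj : j + 1 < n) (h0 : gap y j = 0) :
    (2 ≤ j → gap y (j - 2) = 0) ∧ (j + 3 < n → gap y (j + 2) = 0) := by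
  classical
  have h1 := stationary (Fg n) α y hs he hmin ⟨j, by omega⟩ ⟨j + 1, hj⟩
  rw [Fg_lap hn, Fg_lap hn, ← extN_mk y j, ← extN_mk y (j + 1)] at h1
  have h2 : extN y (j + 1) = extN y j := by unfold gap at h0; linarith
  have h3 : extN y (loN (j + 1)) + extN y (hiN n (j + 1)) = extN y (loN j) + extN y (hiN n j) := by
    rw [h2] at h1; linarith
  have h4 : ∀ k, 2 ≤ k → k + 1 < n → loN k = k - 2 ∧ loN (k + 1) = k - 2 + 1 := by
    intro k h _; unfold loN; rw [if_neg (by omega), if_neg (by omega)]; omega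
  have h5 : ∀ k, k + 3 < n → hiN n k = k + 2 ∧ hiN n (k + 1) = k + 2 + 1 := by
    intro k h; unfold hiN; split_ifs <;> omega
  have hlo : extN y (loN j) ≤ extN y (loN (j + 1)) := by
    rcases Nat.lt_or_ge j 2 with h | h
    · interval_cases j
      · exact h2.le
      · exact le_rfl
    · rw [(h4 j h hj).1, (h4 j h hj).2]
      have := gap_nonneg hy (g := j - 2) (by omega)
      unfold gap at this; linarith
  have hhi : extN y (hiN n j) ≤ extN y (hiN n (j + 1)) := by
    rcases Nat.lt_or_ge (j + 3) n with h | h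
    · rw [(h5 j h).1, (h5 j h).2]
      have := gap_nonneg hy (g := j + 2) (by omega)
      unfold gap at this; linarith
    · rcases (by omega : j + 2 = n ∨ j + 3 = n) with e | e
      · rw [show hiN n j = j + 1 by unfold hiN; split_ifs <;> omega,
          show hiN n (j + 1) = j by unfold hiN; split_ifs <;> omega, h2]
      · rw [show hiN n j = j + 2 by unfold hiN; split_ifs <;> omega,
          show hiN n (j + 1) = j + 2 by unfold hiN; split_ifs <;> omega]
  constructor
  · intro h
    unfold gap
    rw [← (h4 j h hj).2, ← (h4 j h hj).1]
    linarith
  · intro h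
    unfold gap
    rw [← (h5 j h).2, ← (h5 j h).1]
    linarith

lemma gap_dichotomy {n : ℕ} (hn : 5 ≤ n) (α : ℝ) (y : Fin n → ℝ) (hy : Monotone y)
    (h0 : y ≠ 0)
    (hs : ∑ v, y v = 0) (he : en (Fg n) y / 2 = α * ∑ v, (y v) ^ 2)
    (hmin : ∀ z : Fin n → ℝ, ∑ v, z v = 0 → α * ∑ v, (z v) ^ 2 ≤ en (Fg n) z / 2) :
    (∀ g, g + 1 < n → g % 2 = 0 → 0 < gap y g) ∨ (∀ g, g + 1 < n → g % 2 = 1 → 0 < gap y g) := by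
  by_contra hcon
  push Not at hcon
  obtain ⟨⟨a, ha, ha2, ha0⟩, b, hb, hb2, hb0⟩ := hcon
  have ha0 : gap y a = 0 := le_antisymm ha0 (gap_nonneg hy ha)
  have hb0 : gap y b = 0 := le_antisymm hb0 (gap_nonneg hy hb)
  have step := gap_step hn α y hy hs he hmin
  have down : ∀ k j, j = k → j + 1 < n → gap y j = 0 → gap y (j % 2) = 0 := by
    intro k
    induction k using Nat.strong_induction_on with
    | _ k ih =>
      intro j hjk hj h
      rcases Nat.lt_or_ge j 2 with h2 | h2
      · rwa [Nat.mod_eq_of_lt h2]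
      · have := ih (j - 2) (by omega) (j - 2) rfl (by omega) ((step j hj h).1 h2)
        rwa [show (j - 2) % 2 = j % 2 by omega] at this
  have h00 := down a a rfl ha ha0
  have h01 := down b b rfl hb hb0
  rw [ha2] at h00
  rw [hb2] at h01
  have up : ∀ g, (g + 1 < n → gap y g = 0) ∧ (g + 2 < n → gap y (g + 1) = 0) := by
    intro g
    induction g with
    | zero => exact ⟨fun _ => h00, fun _ => h01⟩
    | succ g ih => exact ⟨fun h => ih.2 h, fun h => (step g (by omega) (ih.1 (by omega))).2 h⟩
  have const : ∀ g, g < n → extN y g = extN y 0 := by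
    intro g
    induction g with
    | zero => intro _; rfl
    | succ g ih =>
      intro h
      have h1 := (up g).1 h
      unfold gap at h1
      rw [← ih (by omega)]; linarith
  have hc : ∀ v, y v = extN y 0 := fun v => by rw [← const v v.2, extN_val]
  have : extN y 0 = 0 := by
    have h1 := hs
    simp only [hc] at h1
    simp at h1
    rcases h1 with h1 | h1
    · omega
    · exact h1
  apply h0
  funext v
  rw [hc v, this]; rfl

open Classical in
/-- number of edges crossing both gaps -/
noncomputable def cc {n : ℕ} (H : SimpleGraph (Fin n)) (g h : ℕ) : Finset (Fin n × Fin n) :=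
  Finset.univ.filter fun e => H.Adj e.1 e.2 ∧ e.1 ≤ min g h ∧ max g h < e.2

lemma mem_cc {n : ℕ} {H : SimpleGraph (Fin n)} {g h : ℕ} {e : Fin n × Fin n} :
    e ∈ cc H g h ↔ H.Adj e.1 e.2 ∧ e.1.val ≤ min g h ∧ max g h < e.2.val := by
  simp [cc]

lemma diff_eq {n : ℕ} (y : Fin n → ℝ) (p q : Fin n) (hpq : p ≤ q) :
    y q - y p = ∑ g ∈ Finset.range (n - 1), if p.val ≤ g ∧ g < q.val then gap y g else 0 := by
  rw [← Finset.sum_filter]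
  have : (Finset.range (n - 1)).filter (fun g => p.val ≤ g ∧ g < q.val)
      = Finset.Ico p.val q.val := by
    ext g
    simp only [Finset.mem_filter, Finset.mem_range, Finset.mem_Ico]
    omega
  rw [this]
  unfold gap
  rw [Finset.sum_Ico_sub (f := extN y) hpq, extN_val, extN_val]

lemma en_half {n : ℕ} (H : SimpleGraph (Fin n)) (y : Fin n → ℝ) :
    en H y / 2 = ∑ g ∈ Finset.range (n - 1), ∑ h ∈ Finset.range (n - 1),
      gap y g * gap y h * ((cc H g h).card : ℝ) := by
  classical
  have h1 : en H y = 2 * ∑ i, ∑ j, if H.Adj i j ∧ i ≤ j then (y j - y i) ^ 2 else 0 := by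
    have h2 : en H y = (∑ i, ∑ j, if H.Adj i j ∧ i ≤ j then (y j - y i) ^ 2 else 0)
        + ∑ i, ∑ j, if H.Adj j i ∧ j ≤ i then (y i - y j) ^ 2 else 0 := by
      unfold en
      rw [← Finset.sum_add_distrib]
      refine Finset.sum_congr rfl fun i _ => ?_
      rw [← Finset.sum_add_distrib]
      refine Finset.sum_congr rfl fun j _ => ?_
      by_cases ha : H.Adj i j
      · have ha' := ha.symm
        rcases lt_or_gt_of_ne ha.ne with h | h
        · simp [ha, ha', h.le, h.not_ge]; ring
        · simp [ha, ha', h.le, h.not_ge]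
      · have ha' : ¬ H.Adj j i := fun h => ha h.symm
        simp [ha, ha']
    rw [h2, two_mul]
    congr 1
    exact Finset.sum_comm
  rw [h1, mul_div_cancel_left₀ _ two_ne_zero]
  have h3 : ∀ g h, ((cc H g h).card : ℝ) = ∑ i : Fin n, ∑ j : Fin n,
      if H.Adj i j ∧ i.val ≤ min g h ∧ max g h < j.val then (1 : ℝ) else 0 := by
    intro g h
    rw [← Fintype.sum_prod_type' (f := fun i j : Fin n =>
      if H.Adj i j ∧ i.val ≤ min g h ∧ max g h < j.val then (1 : ℝ) else 0)]
    rw [Finset.sum_boole]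
    congr 2
  simp only [h3, Finset.mul_sum]
  have h4 : ∀ i j : Fin n, (if H.Adj i j ∧ i ≤ j then (y j - y i) ^ 2 else 0)
      = ∑ g ∈ Finset.range (n - 1), ∑ h ∈ Finset.range (n - 1), gap y g * gap y h *
        (if H.Adj i j ∧ i.val ≤ min g h ∧ max g h < j.val then (1 : ℝ) else 0) := by
    intro i j
    by_cases ha : H.Adj i j ∧ i ≤ j
    · rw [if_pos ha, diff_eq y i j ha.2, sq, Finset.sum_mul_sum]
      refine Finset.sum_congr rfl fun g _ => Finset.sum_congr rfl fun h _ => ?_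
      by_cases h1 : i.val ≤ g ∧ g < j.val
      · by_cases h2 : i.val ≤ h ∧ h < j.val
        · rw [if_pos h1, if_pos h2, if_pos ⟨ha.1, by omega, by omega⟩, mul_one]
        · have h3 : ¬ (H.Adj i j ∧ i.val ≤ min g h ∧ max g h < j.val) := fun hh => h2 (by omega)
          rw [if_neg h2, if_neg h3]; simp
      · have h3 : ¬ (H.Adj i j ∧ i.val ≤ min g h ∧ max g h < j.val) := fun hh => h1 (by omega)
        rw [if_neg h1, if_neg h3]; simp
    · rw [if_neg ha]
      symm
      refine Finset.sum_eq_zero fun g _ => Finset.sum_eq_zero fun h _ => ?_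
      rw [if_neg, mul_zero]
      rintro ⟨h1, h2, h3⟩
      exact ha ⟨h1, Fin.le_def.2 (by omega)⟩
  simp only [h4]
  simp_rw [Finset.sum_comm (s := (Finset.univ : Finset (Fin n))) (t := Finset.range (n - 1))]

lemma cc_F_diag {n : ℕ} (hn : 5 ≤ n) (g : ℕ) (hg : g + 1 < n) : (cc (Fg n) g g).card ≤ 2 := by
  classical
  refine le_trans (Finset.card_le_card (t := {(⟨g - 1, by omega⟩, ⟨g + 1, hg⟩),
    (⟨g, by omega⟩, ⟨min (g + 2) (n - 1), by omega⟩)}) ?_) Finset.card_le_two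
  rintro ⟨⟨a, ha⟩, ⟨b, hb⟩⟩ h
  rw [mem_cc] at h
  obtain ⟨⟨-, h⟩, h2⟩ := h
  simp only [Finset.mem_insert, Finset.mem_singleton, Prod.ext_iff, Fin.ext_iff]
  unfold Fr at h
  simp only at h h2
  omega

lemma cc_F_next {n : ℕ} (g : ℕ) (hg : g + 2 < n) :
    (cc (Fg n) g (g + 1)).card ≤ 1 := by
  classical
  refine le_trans (Finset.card_le_card (t := {(⟨g, by omega⟩, ⟨g + 2, by omega⟩)}) ?_)
    (Finset.card_singleton _).le
  rintro ⟨⟨a, ha⟩, ⟨b, hb⟩⟩ h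
  rw [mem_cc] at h
  obtain ⟨⟨-, h⟩, h2⟩ := h
  simp only [Finset.mem_singleton, Prod.ext_iff, Fin.ext_iff]
  unfold Fr at h
  simp only at h h2
  omega

lemma cc_F_far {n : ℕ} (g h : ℕ) (hgh : g + 2 ≤ h) :
    (cc (Fg n) g h).card = 0 := by
  classical
  rw [Finset.card_eq_zero, Finset.eq_empty_iff_forall_notMem]
  rintro ⟨⟨a, ha⟩, ⟨b, hb⟩⟩ h
  rw [mem_cc] at h
  obtain ⟨⟨-, h⟩, h2⟩ := h
  unfold Fr at h
  simp only at h h2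
  omega

lemma cc_symm {n : ℕ} (H : SimpleGraph (Fin n)) (g h : ℕ) : cc H g h = cc H h g := by
  ext e
  rw [mem_cc, mem_cc, min_comm, max_comm]

lemma cc_diag {n : ℕ} (hn : 5 ≤ n) {H : SimpleGraph (Fin n)} (hH : CutProp H) (g : ℕ)
    (hg : g + 1 < n) : 2 ≤ (cc H g g).card := by
  rcases (by omega : 1 ≤ g ∨ g + 2 < n) with h | h
  · have key : ∀ w : Fin n, w.val ≤ g → ∃ e ∈ cc H g g, e.1 ≠ w := by
      intro w hw
      obtain ⟨p, q, hp, hq, hqw, ha⟩ := hH {p | g < p.val} w ⟨g + 1, hg⟩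
        (if w.val = 0 then ⟨1, by omega⟩ else ⟨0, by omega⟩) (by simp [hw]) (by simp)
        (by split_ifs <;> simp; omega) (by split_ifs <;> rw [Ne, Fin.ext_iff] <;> simp only <;> omega)
      simp only [Set.mem_ofPred_eq] at hp hq
      exact ⟨(q, p), mem_cc.2 ⟨ha.symm, by simp only; omega, by simp only; omega⟩, hqw⟩
    obtain ⟨e, he, -⟩ := key ⟨0, by omega⟩ (by simp)
    obtain ⟨f, hf, hfe⟩ := key e.1 (by have := (mem_cc.1 he).2; omega)
    exact Finset.one_lt_card.2 ⟨f, hf, e, he, fun h => hfe (by rw [h])⟩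
  · have key : ∀ w : Fin n, g < w.val → ∃ e ∈ cc H g g, e.2 ≠ w := by
      intro w hw
      obtain ⟨p, q, hp, hq, hqw, ha⟩ := hH {p | p.val ≤ g} w ⟨g, by omega⟩
        (if w.val = g + 1 then ⟨g + 2, by omega⟩ else ⟨g + 1, by omega⟩) (by simp [hw]) (by simp)
        (by split_ifs <;> simp) (by split_ifs <;> rw [Ne, Fin.ext_iff] <;> simp only <;> omega)
      simp only [Set.mem_ofPred_eq] at hp hq
      exact ⟨(p, q), mem_cc.2 ⟨ha, by simp only; omega, by simp only; omega⟩, hqw⟩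
    obtain ⟨e, he, -⟩ := key ⟨g + 1, by omega⟩ (by simp)
    obtain ⟨f, hf, hfe⟩ := key e.2 (by have := (mem_cc.1 he).2; omega)
    exact Finset.one_lt_card.2 ⟨f, hf, e, he, fun h => hfe (by rw [h])⟩

lemma cc_next {n : ℕ} {H : SimpleGraph (Fin n)} (hH : CutProp H) (g : ℕ)
    (hg : g + 2 < n) : 1 ≤ (cc H g (g + 1)).card := by
  obtain ⟨p, q, hp, hq, hqw, ha⟩ := hH {p | p.val ≤ g} ⟨g + 1, by omega⟩ ⟨g, by omega⟩
    ⟨g + 2, by omega⟩ (by simp) (by simp) (by simp) (by simp)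
  simp only [Set.mem_ofPred_eq, Ne, Fin.ext_iff] at hp hq hqw
  exact Finset.card_pos.2 ⟨(p, q), mem_cc.2 ⟨ha, by simp only; omega, by simp only; omega⟩⟩

lemma cc_le {n : ℕ} (hn : 5 ≤ n) {H : SimpleGraph (Fin n)} (hH : CutProp H) (g h : ℕ)
    (hg : g + 1 < n) (hh : h + 1 < n) : (cc (Fg n) g h).card ≤ (cc H g h).card := by
  have main : ∀ g h, g + 1 < n → h + 1 < n → g ≤ h →
      (cc (Fg n) g h).card ≤ (cc H g h).card := by
    intro g h hg hh hgh
    rcases (by omega : h = g ∨ h = g + 1 ∨ g + 2 ≤ h) with rfl | rfl | h2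
    · exact (cc_F_diag hn h hg).trans (cc_diag hn hH h hg)
    · exact (cc_F_next g hh).trans (cc_next hH g hh)
    · rw [cc_F_far g h h2]; exact Nat.zero_le _
  rcases le_total g h with h1 | h1
  · exact main g h hg hh h1
  · rw [cc_symm _ g h, cc_symm _ g h]; exact main h g hh hg h1

lemma en_ge {n : ℕ} (hn : 5 ≤ n) {H : SimpleGraph (Fin n)} (hH : CutProp H)
    {y : Fin n → ℝ} (hy : Monotone y) : en (Fg n) y / 2 ≤ en H y / 2 := by
  rw [en_half, en_half]
  refine Finset.sum_le_sum fun g hg => Finset.sum_le_sum fun h hh => ?_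
  rw [Finset.mem_range] at hg hh
  have h1 := gap_nonneg hy (g := g) (by omega)
  have h2 := gap_nonneg hy (g := h) (by omega)
  have h3 := cc_le hn hH g h (by omega) (by omega)
  gcongr

lemma cc_eq {n : ℕ} (hn : 5 ≤ n) {H : SimpleGraph (Fin n)} (hH : CutProp H)
    {y : Fin n → ℝ} (hy : Monotone y) (he : en (Fg n) y / 2 = en H y / 2) (g h : ℕ)
    (hg : g + 1 < n) (hh : h + 1 < n) (hg0 : 0 < gap y g) (hh0 : 0 < gap y h) :
    (cc H g h).card = (cc (Fg n) g h).card := by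
  rw [en_half, en_half] at he
  have hle : ∀ g ∈ Finset.range (n - 1), ∀ h ∈ Finset.range (n - 1),
      gap y g * gap y h * ((cc (Fg n) g h).card : ℝ) ≤ gap y g * gap y h * ((cc H g h).card : ℝ) := by
    intro g hg h hh
    rw [Finset.mem_range] at hg hh
    have h1 := gap_nonneg hy (g := g) (by omega)
    have h2 := gap_nonneg hy (g := h) (by omega)
    have h3 := cc_le hn hH g h (by omega) (by omega)
    gcongr
  have hg' : g ∈ Finset.range (n - 1) := by rw [Finset.mem_range]; omega
  have hh' : h ∈ Finset.range (n - 1) := by rw [Finset.mem_range]; omega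
  have e1 := (Finset.sum_eq_sum_iff_of_le (fun g hg => Finset.sum_le_sum (hle g hg))).1 he g hg'
  have e2 := (Finset.sum_eq_sum_iff_of_le (hle g hg')).1 e1 h hh'
  have e3 := mul_left_cancel₀ (mul_pos hg0 hh0).ne' e2
  exact_mod_cast e3.symm

def partner (p : ℕ) : ℕ := if p = 0 then 0 else if p % 2 = 1 then p + 1 else p - 1

def crossed (R : ℕ → ℕ → Prop) (k : ℕ) : Prop := 1 ≤ k ∧ R (2 * k - 1) (2 * k + 2)

def swp (R : ℕ → ℕ → Prop) : ℕ → Prop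
  | 0 => False
  | k + 1 => Xor (swp R k) (crossed R k)

open Classical in
noncomputable def tau (R : ℕ → ℕ → Prop) (p : ℕ) : ℕ :=
  if swp R ((p + 1) / 2) then partner p else p

lemma partner_level (p : ℕ) : (partner p + 1) / 2 = (p + 1) / 2 := by
  unfold partner; split_ifs <;> omega

lemma partner_odd {p : ℕ} (h : p % 2 = 1) : partner p = p + 1 := by
  unfold partner; rw [if_neg (by omega), if_pos h]

lemma partner_even {p : ℕ} (h : p % 2 = 1) : partner (p + 1) = p := by
  unfold partner; rw [if_neg (by omega), if_neg (by omega)]; omega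

lemma partner_partner (p : ℕ) : partner (partner p) = p := by
  rcases (by omega : p = 0 ∨ (p ≠ 0 ∧ p % 2 = 1) ∨ (p ≠ 0 ∧ p % 2 = 0)) with h | h | h
  · subst h; rfl
  · have h1 : partner p = p + 1 := by simp [partner, h.1, h.2]
    rw [h1]
    unfold partner
    rw [if_neg (by omega), if_neg (by omega)]; omega
  · have h1 : partner p = p - 1 := by simp [partner, h.1, h.2]
    rw [h1]
    unfold partner
    rw [if_neg (by omega), if_pos (by omega)]; omega

lemma tau_tau (R : ℕ → ℕ → Prop) (p : ℕ) : tau R (tau R p) = p := by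
  unfold tau
  by_cases h : swp R ((p + 1) / 2)
  · rw [if_pos h, partner_level, if_pos h, partner_partner]
  · rw [if_neg h, if_neg h]

lemma tau_lt (R : ℕ → ℕ → Prop) {m p : ℕ} (h : p < 2 * m + 1) : tau R p < 2 * m + 1 := by
  unfold tau partner
  split_ifs <;> omega

lemma tau_level (R : ℕ → ℕ → Prop) (p : ℕ) : (tau R p + 1) / 2 = (p + 1) / 2 := by
  unfold tau
  split_ifs
  · exact partner_level p
  · rfl

lemma prop_match {ac ad bc bd : Prop} (ua : ac ∨ ad) (ub : bc ∨ bd) (dd : ad ∨ bd)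
    (dc : ac ∨ bc) (t1 : ac → ad → bc → False) (t2 : ac → ad → bd → False)
    (t3 : ac → bc → bd → False) (t4 : ad → bc → bd → False) :
    (ac ∧ bd ∧ ¬ ad ∧ ¬ bc) ∨ (ad ∧ bc ∧ ¬ ac ∧ ¬ bd) := by
  by_cases ac <;> by_cases ad <;> by_cases bc <;> by_cases bd <;> simp_all

lemma struct {m : ℕ} (hm : 2 ≤ m) (R : ℕ → ℕ → Prop) (hsym : ∀ a b, R a b → R b a)
    (hlt : ∀ a b, R a b → a < 2 * m + 1)
    (hlev : ∀ a b, R a b → (b + 1) / 2 ≤ (a + 1) / 2 + 1)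
    (htri : ∀ k a b a' b' a'' b'', a ≤ 2 * k → a' ≤ 2 * k → a'' ≤ 2 * k →
      2 * k < b → 2 * k < b' → 2 * k < b'' → R a b → R a' b' → R a'' b'' →
      (a ≠ a' ∨ b ≠ b') → (a ≠ a'' ∨ b ≠ b'') → (a' ≠ a'' ∨ b' ≠ b'') → False)
    (hcut : ∀ (A : ℕ → Prop) (w u v : ℕ), w < 2 * m + 1 → u < 2 * m + 1 → v < 2 * m + 1 →
      ¬ A w → A u → ¬ A v → v ≠ w → ∃ p q, A p ∧ ¬ A q ∧ q ≠ w ∧ R p q) (hirr : ∀ a, ¬ R a a) :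
    ∀ a b, a < b → b < 2 * m + 1 →
      (R (tau R a) (tau R b) ↔ Fr (2 * m + 1) a b ∨ (a % 2 = 1 ∧ b = a + 1 ∧ R a b)) := by
  have h01 : R 0 1 := by
    obtain ⟨p, q, hp, hq, hqw, h⟩ := hcut (fun p => p = 0) 2 0 1 (by omega) (by omega) (by omega)
      (by simp) rfl (by simp) (by simp)
    have h1 := hlev _ _ h
    subst hp
    rwa [show q = 1 by omega] at h
  have h02 : R 0 2 := by
    obtain ⟨p, q, hp, hq, hqw, h⟩ := hcut (fun p => p = 0) 1 0 2 (by omega) (by omega) (by omega)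
      (by simp) rfl (by simp) (by simp)
    have h1 := hlev _ _ h
    subst hp
    rwa [show q = 2 by omega] at h
  have hmat : ∀ k, 1 ≤ k → k < m →
      (R (2 * k - 1) (2 * k + 1) ∧ R (2 * k) (2 * k + 2) ∧ ¬ R (2 * k - 1) (2 * k + 2) ∧
        ¬ R (2 * k) (2 * k + 1)) ∨
      (R (2 * k - 1) (2 * k + 2) ∧ R (2 * k) (2 * k + 1) ∧ ¬ R (2 * k - 1) (2 * k + 1) ∧
        ¬ R (2 * k) (2 * k + 2)) := by
    intro k hk hkm
    have ua : R (2 * k - 1) (2 * k + 1) ∨ R (2 * k - 1) (2 * k + 2) := by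
      obtain ⟨p, q, hp, hq, hqw, h⟩ := hcut (fun p => p ≤ 2 * k ∧ p ≠ 2 * k) (2 * k) 0 (2 * k + 1)
        (by omega) (by omega) (by omega) (by simp) (by simp; omega) (by simp) (by simp)
      have h1 := hlev _ _ h
      have hp' : p = 2 * k - 1 := by omega
      rcases (by omega : q = 2 * k + 1 ∨ q = 2 * k + 2) with e | e
      · left; rwa [hp', e] at h
      · right; rwa [hp', e] at h
    have ub : R (2 * k) (2 * k + 1) ∨ R (2 * k) (2 * k + 2) := by
      obtain ⟨p, q, hp, hq, hqw, h⟩ := hcut (fun p => p ≤ 2 * k ∧ p ≠ 2 * k - 1) (2 * k - 1) 0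
        (2 * k + 1)
        (by omega) (by omega) (by omega) (by simp) (by simp; omega) (by simp) (by omega)
      have h1 := hlev _ _ h
      have hp' : p = 2 * k := by omega
      rcases (by omega : q = 2 * k + 1 ∨ q = 2 * k + 2) with e | e
      · left; rwa [hp', e] at h
      · right; rwa [hp', e] at h
    have dd : R (2 * k - 1) (2 * k + 2) ∨ R (2 * k) (2 * k + 2) := by
      obtain ⟨p, q, hp, hq, hqw, h⟩ := hcut (fun p => 2 * k < p ∧ p ≠ 2 * k + 1) (2 * k + 1)
        (2 * k + 2) 0
        (by omega) (by omega) (by omega) (by simp) (by simp) (by simp) (by omega)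
      have h := hsym _ _ h
      have h1 := hlev _ _ h
      have hp' : p = 2 * k + 2 := by omega
      rcases (by omega : q = 2 * k - 1 ∨ q = 2 * k) with e | e
      · left; rwa [hp', e] at h
      · right; rwa [hp', e] at h
    have dc : R (2 * k - 1) (2 * k + 1) ∨ R (2 * k) (2 * k + 1) := by
      obtain ⟨p, q, hp, hq, hqw, h⟩ := hcut (fun p => 2 * k < p ∧ p ≠ 2 * k + 2) (2 * k + 2)
        (2 * k + 1) 0
        (by omega) (by omega) (by omega) (by simp) (by simp) (by simp) (by omega)
      have h := hsym _ _ h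
      have h1 := hlev _ _ h
      have hp' : p = 2 * k + 1 := by omega
      rcases (by omega : q = 2 * k - 1 ∨ q = 2 * k) with e | e
      · left; rwa [hp', e] at h
      · right; rwa [hp', e] at h
    have t1 : R (2 * k - 1) (2 * k + 1) → R (2 * k - 1) (2 * k + 2) → R (2 * k) (2 * k + 1) →
      False := fun x y z => htri k _ _ _ _ _ _ (by omega) (by omega) (by omega) (by omega)
        (by omega) (by omega) x y z (by omega) (by omega) (by omega)
    have t2 : R (2 * k - 1) (2 * k + 1) → R (2 * k - 1) (2 * k + 2) → R (2 * k) (2 * k + 2) →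
      False := fun x y z => htri k _ _ _ _ _ _ (by omega) (by omega) (by omega) (by omega)
        (by omega) (by omega) x y z (by omega) (by omega) (by omega)
    have t3 : R (2 * k - 1) (2 * k + 1) → R (2 * k) (2 * k + 1) → R (2 * k) (2 * k + 2) →
      False := fun x y z => htri k _ _ _ _ _ _ (by omega) (by omega) (by omega) (by omega)
        (by omega) (by omega) x y z (by omega) (by omega) (by omega)
    have t4 : R (2 * k - 1) (2 * k + 2) → R (2 * k) (2 * k + 1) → R (2 * k) (2 * k + 2) →
      False := fun x y z => htri k _ _ _ _ _ _ (by omega) (by omega) (by omega) (by omega)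
        (by omega) (by omega) x y z (by omega) (by omega) (by omega)
    exact prop_match ua ub dd dc t1 t2 t3 t4
  have hlast : R (2 * m - 1) (2 * m) := by
    have hd : ∃ x, x < 2 * m - 1 ∧ ∀ q, R (2 * m - 1) q → q ≠ x → q = 2 * m := by
      have lev : ∀ q, R (2 * m - 1) q → q = 2 * (m - 1) - 1 ∨ q = 2 * (m - 1) ∨ q = 2 * m := by
        intro q hq
        have h1 := hlev _ _ (hsym _ _ hq)
        have h2 := hlt _ _ (hsym _ _ hq)
        have h3 : q ≠ 2 * m - 1 := fun e => hirr _ (e ▸ hq)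
        omega
      have e : 2 * m - 1 = 2 * (m - 1) + 1 := by omega
      rcases hmat (m - 1) (by omega) (by omega) with h | h
      · refine ⟨2 * (m - 1) - 1, by omega, fun q hq hne => ?_⟩
        rcases lev q hq with h' | h' | h'
        · exact absurd h' hne
        · rw [h', e] at hq
          exact absurd (hsym _ _ hq) h.2.2.2
        · exact h'
      · refine ⟨2 * (m - 1), by omega, fun q hq hne => ?_⟩
        rcases lev q hq with h' | h' | h'
        · rw [h', e] at hq
          exact absurd (hsym _ _ hq) h.2.2.1
        · exact absurd h' hne
        · exact h'
    obtain ⟨x, hx, hx'⟩ := hd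
    obtain ⟨p, q, hp, hq, hqw, h⟩ := hcut (fun p => p = 2 * m - 1) x (2 * m - 1) (2 * m)
      (by omega) (by omega) (by omega) (by omega) rfl (by omega) (by omega)
    subst hp
    rwa [hx' q h hqw] at h
  have s1 : ¬ swp R 1 := by
    simp [swp, crossed, Xor]
  classical
  intro a b hab hb
  have la := tau_level R a
  have lb := tau_level R b
  rcases (by omega : (b + 1) / 2 = (a + 1) / 2 ∨ (b + 1) / 2 = (a + 1) / 2 + 1 ∨
    (a + 1) / 2 + 2 ≤ (b + 1) / 2) with h | h | h
  · obtain rfl : b = a + 1 := by omega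
    have ha : a % 2 = 1 := by omega
    have hR : R (tau R a) (tau R (a + 1)) ↔ R a (a + 1) := by
      unfold tau
      rw [h]
      by_cases hs : swp R ((a + 1) / 2)
      · rw [if_pos hs, if_pos hs, partner_odd ha,
          partner_even ha]
        exact ⟨hsym _ _, hsym _ _⟩
      · rw [if_neg hs, if_neg hs]
    rw [hR]
    constructor
    · intro h; exact Or.inr ⟨ha, rfl, h⟩
    · rintro (h | h)
      · unfold Fr at h
        have : a = 2 * m - 1 := by omega
        rw [this, show 2 * m - 1 + 1 = 2 * m by omega]
        exact hlast
      · exact h.2.2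
  · by_cases ha0 : a = 0
    · subst ha0
      have ta : tau R 0 = 0 := by unfold tau partner; simp
      have tb : tau R b = b := by
        unfold tau
        rw [show (b + 1) / 2 = 1 by omega, if_neg s1]
      rw [ta, tb]
      rcases (by omega : b = 1 ∨ b = 2) with rfl | rfl
      · simp [h01, Fr]
      · simp [h02, Fr]
    · obtain ⟨k, hk⟩ : ∃ k, k = (a + 1) / 2 := ⟨_, rfl⟩
      have hk1 : 1 ≤ k := by omega
      have hkm : k < m := by omega
      have hM := hmat k hk1 hkm
      have hF : (Fr (2 * m + 1) a b ∨ (a % 2 = 1 ∧ b = a + 1 ∧ R a b)) ↔ b = a + 2 := by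
        unfold Fr
        constructor
        · rintro (h | h)
          · omega
          · omega
        · intro h; omega
      rw [hF]
      have hsw : swp R (k + 1) ↔ Xor (swp R k) (R (2 * k - 1) (2 * k + 2)) := by
        simp [swp, crossed, hk1]
      have ta : tau R a = if swp R k then partner a else a := by unfold tau; rw [← hk]
      have tb : tau R b = if swp R (k + 1) then partner b else b := by
        unfold tau; rw [h, ← hk]
      have pa1 : partner (2 * k - 1) = 2 * k := by unfold partner; split_ifs <;> omega
      have pa2 : partner (2 * k) = 2 * k - 1 := by unfold partner; split_ifs <;> omega
      have pb1 : partner (2 * k + 1) = 2 * k + 2 := by unfold partner; split_ifs <;> omega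
      have pb2 : partner (2 * k + 2) = 2 * k + 1 := by unfold partner; split_ifs <;> omega
      rw [ta, tb]
      rcases (by omega : a = 2 * k - 1 ∨ a = 2 * k) with ea | ea <;>
      rcases (by omega : b = 2 * k + 1 ∨ b = 2 * k + 2) with eb | eb <;>
      · first
          | have hx : b = a + 2 := by omega
            simp only [hx, iff_true]
            rw [← hx]
          | have hx : b ≠ a + 2 := by omega
            simp only [hx, iff_false]
        rw [ea, eb]
        simp only [hsw, Xor, pa1, pa2, pb1, pb2]
        clear htri hcut hlev hlt hsym hirr hmat hF hsw la lb ta tb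
        by_cases hs : swp R k <;> rcases hM with hM | hM <;> simp [hs, hM]
  · have : ¬ R (tau R a) (tau R b) := by
      intro h'
      have := hlev _ _ h'
      omega
    simp only [this, false_iff]
    unfold Fr
    rintro (h | h) <;> omega

def Concl {V : Type*} (G : SimpleGraph V) (n : ℕ) : Prop :=
  Nonempty (G ≃g SimpleGraph.cycleGraph n) ∨
      ∃ (k : ℕ) (i : Fin k → ℕ), 1 ≤ k ∧ Monotone i ∧
        (∀ j, 1 ≤ i j ∧ i j ≤ (n - 3) / 2) ∧ Nonempty (G ≃g H12 n k i)

lemma Concl.transfer {V W : Type*} {G : SimpleGraph V} {H : SimpleGraph W} {n : ℕ} (f : G ≃g H)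
    (h : Concl H n) : Concl G n := by
  rcases h with ⟨⟨g⟩⟩ | ⟨k, i, h1, h2, h3, ⟨g⟩⟩
  · exact Or.inl ⟨f.trans g⟩
  · exact Or.inr ⟨k, i, h1, h2, h3, ⟨f.trans g⟩⟩

lemma H12_adj {n k : ℕ} (i : Fin k → ℕ) (u v : Fin n) : (H12 n k i).Adj u v ↔
    (SimpleGraph.cycleGraph n).Adj u v ∨ (u ≠ v ∧ ∃ j, (u.val = i j ∧ v.val = n - i j) ∨
      (v.val = i j ∧ u.val = n - i j)) := by
  unfold H12 cyclePlusChords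
  rw [SimpleGraph.sup_adj, SimpleGraph.fromEdgeSet_adj]
  apply or_congr Iff.rfl
  rw [and_comm]
  apply and_congr Iff.rfl
  constructor
  · rintro ⟨j, a, b, ha, hb, he⟩
    rw [Sym2.eq_iff] at he
    rcases he with ⟨rfl, rfl⟩ | ⟨rfl, rfl⟩
    · exact ⟨j, Or.inl ⟨ha, hb⟩⟩
    · exact ⟨j, Or.inr ⟨ha, hb⟩⟩
  · rintro ⟨j, h | h⟩
    · exact ⟨j, u, v, h.1, h.2, rfl⟩
    · exact ⟨j, v, u, h.1, h.2, Sym2.eq_swap⟩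

lemma build_iso {m : ℕ} (hm : 2 ≤ m) (H : SimpleGraph (Fin (2 * m + 1))) (R : ℕ → ℕ → Prop)
    (hR : ∀ u v : Fin (2 * m + 1), H.Adj u v ↔ R u v)
    (hst : ∀ a b, a < b → b < 2 * m + 1 →
      (R (tau R a) (tau R b) ↔ Fr (2 * m + 1) a b ∨ (a % 2 = 1 ∧ b = a + 1 ∧ R a b))) :
    Concl H (2 * m + 1) := by
  classical
  have hodd : Odd (2 * m + 1) := ⟨m, rfl⟩
  have hinv : Function.Involutive (fun u : Fin (2 * m + 1) =>
      (⟨tau R u, tau_lt R u.2⟩ : Fin (2 * m + 1))) := fun u => Fin.ext (tau_tau R u)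
  set e : Fin (2 * m + 1) ≃ Fin (2 * m + 1) := (foldE _ hodd).trans hinv.toPerm with he
  have hev : ∀ u, (e u).val = tau R (foldN (2 * m + 1) u) := fun u => rfl
  set S : Finset ℕ := (Finset.Icc 1 (m - 1)).filter (fun l => R (2 * l - 1) (2 * l)) with hS
  have hmS : ∀ l, l ∈ S ↔ (1 ≤ l ∧ l ≤ m - 1) ∧ R (2 * l - 1) (2 * l) := by
    intro l; simp [hS]
  have half : ∀ u v : Fin (2 * m + 1), foldN (2 * m + 1) u < foldN (2 * m + 1) v →
      (H.Adj (e u) (e v) ↔ (SimpleGraph.cycleGraph (2 * m + 1)).Adj u v ∨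
        (∃ l ∈ S, (u.val = l ∧ v.val = 2 * m + 1 - l) ∨ (v.val = l ∧ u.val = 2 * m + 1 - l))) := by
    intro u v huv
    have hu := u.2
    have hv := v.2
    rw [hR, hev, hev, hst _ _ huv (foldN_lt hodd v.2), ← fold_adj hodd (by omega)]
    have hF : (Fg (2 * m + 1)).Adj (foldE _ hodd u) (foldE _ hodd v) ↔
        Fr (2 * m + 1) (foldN (2 * m + 1) u) (foldN (2 * m + 1) v) := by
      show (_ ≠ _ ∧ (Fr _ (foldN _ u) (foldN _ v) ∨ Fr _ (foldN _ v) (foldN _ u))) ↔ _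
      constructor
      · rintro ⟨-, h | h⟩
        · exact h
        · unfold Fr at h; omega
      · intro h
        refine ⟨?_, Or.inl h⟩
        rw [Ne, Fin.ext_iff, foldE_val, foldE_val]
        omega
    rw [hF]
    constructor
    · rintro (h | ⟨h1, h2, h3⟩)
      · exact Or.inl h
      · by_cases hlast : foldN (2 * m + 1) u = 2 * m - 1
        · left; unfold Fr; omega
        · right
          refine ⟨u.val, (hmS _).2 ⟨?_, ?_⟩, Or.inl ⟨rfl, ?_⟩⟩
          · unfold foldN at h1 hlast; split_ifs at h1 hlast <;> omega
          · have e1 : foldN (2 * m + 1) u = 2 * u.val - 1 := by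
              unfold foldN at h1 ⊢; split_ifs at h1 ⊢ <;> omega
            have e2 : foldN (2 * m + 1) v = 2 * u.val := by omega
            rwa [e1, e2] at h3
          · unfold foldN at h1 h2; split_ifs at h1 h2 <;> omega
    · rintro (h | ⟨l, hl, h⟩)
      · exact Or.inl h
      · right
        obtain ⟨⟨l1, l2⟩, l3⟩ := (hmS l).1 hl
        have key : foldN (2 * m + 1) l = 2 * l - 1 := by unfold foldN; rw [if_pos (by omega)]
        have key2 : foldN (2 * m + 1) (2 * m + 1 - l) = 2 * l := by
          unfold foldN; rw [if_neg (by omega)]; omega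
        rcases h with h | h
        · rw [h.1, h.2, key, key2]
          exact ⟨by omega, by omega, l3⟩
        · rw [h.1, h.2, key, key2] at huv
          omega
  have full : ∀ u v : Fin (2 * m + 1), 
      (H.Adj (e u) (e v) ↔ (SimpleGraph.cycleGraph (2 * m + 1)).Adj u v ∨ (u ≠ v ∧
        (∃ l ∈ S, (u.val = l ∧ v.val = 2 * m + 1 - l) ∨ (v.val = l ∧ u.val = 2 * m + 1 - l)))) := by
    intro u v
    rcases lt_trichotomy (foldN (2 * m + 1) u) (foldN (2 * m + 1) v) with h | h | h
    · have : u ≠ v := fun e => by rw [e] at h; omega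
      rw [half u v h]; simp [this]
    · have : u = v := Fin.ext (foldN_inj hodd u.2 v.2 h)
      subst this
      simp
    · have : u ≠ v := fun e => by rw [e] at h; omega
      rw [SimpleGraph.adj_comm, half v u h, SimpleGraph.adj_comm]
      simp only [ne_eq, this, not_false_eq_true, true_and]
      apply or_congr Iff.rfl
      exact exists_congr fun l => and_congr Iff.rfl or_comm
  rcases S.eq_empty_or_nonempty with h0 | h0
  · left
    refine ⟨RelIso.symm ⟨e, ?_⟩⟩
    intro u v
    rw [full]; simp [h0]
  · right
    refine ⟨S.card, S.orderEmbOfFin rfl, Finset.card_pos.2 h0, (S.orderEmbOfFin rfl).monotone,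
      ?_, ⟨RelIso.symm ⟨e, ?_⟩⟩⟩
    · intro j
      have := ((hmS _).1 (S.orderEmbOfFin_mem rfl j)).1
      omega
    · intro u v
      rw [full, H12_adj]
      apply or_congr Iff.rfl
      apply and_congr Iff.rfl
      constructor
      · rintro ⟨l, hl, h⟩
        have : l ∈ Set.range (S.orderEmbOfFin rfl) := by
          rw [Finset.range_orderEmbOfFin]; exact hl
        obtain ⟨j, rfl⟩ := this
        exact ⟨j, h⟩
      · rintro ⟨j, h⟩
        exact ⟨_, S.orderEmbOfFin_mem rfl j, h⟩

lemma concl_of_gaps {m : ℕ} (hm : 2 ≤ m) {H : SimpleGraph (Fin (2 * m + 1))} (hH : CutProp H)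
    {y : Fin (2 * m + 1) → ℝ} (hy : Monotone y) (he : en (Fg (2 * m + 1)) y / 2 = en H y / 2)
    (hgap : ∀ g, g + 1 < 2 * m + 1 → g % 2 = 0 → 0 < gap y g) : Concl H (2 * m + 1) := by
  classical
  have hn : 5 ≤ 2 * m + 1 := by omega
  set R : ℕ → ℕ → Prop := fun a b => ∃ ha hb, H.Adj ⟨a, ha⟩ ⟨b, hb⟩ with hRdef
  have hmemcc : ∀ {a b g h} (ha : a < 2 * m + 1) (hb : b < 2 * m + 1),
      H.Adj ⟨a, ha⟩ ⟨b, hb⟩ → a ≤ min g h → max g h < b →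
      ((⟨a, ha⟩, ⟨b, hb⟩) : Fin (2 * m + 1) × Fin (2 * m + 1)) ∈ cc H g h :=
    fun ha hb h h1 h2 => mem_cc.2 ⟨h, h1, h2⟩
  refine build_iso hm H R (fun u v => ⟨fun h => ⟨u.2, v.2, h⟩, fun ⟨_, _, h⟩ => h⟩)
    (struct hm R ?_ ?_ ?_ ?_ ?_ ?_)
  · rintro a b ⟨ha, hb, h⟩
    exact ⟨hb, ha, h.symm⟩
  · rintro a b ⟨ha, hb, h⟩
    exact ha
  · rintro a b ⟨ha, hb, h⟩
    by_contra hc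
    have h1 := cc_eq hn hH hy he (2 * ((a + 1) / 2)) (2 * ((a + 1) / 2) + 2) (by omega) (by omega)
      (hgap _ (by omega) (by omega)) (hgap _ (by omega) (by omega))
    rw [cc_F_far _ _ le_rfl, Finset.card_eq_zero] at h1
    have h2 := hmemcc (g := 2 * ((a + 1) / 2)) (h := 2 * ((a + 1) / 2) + 2) ha hb h
      (by omega) (by omega)
    rw [h1] at h2
    simp at h2
  · rintro k a b a' b' a'' b'' h1 h2 h3 h4 h5 h6 ⟨ha, hb, h⟩ ⟨ha', hb', h'⟩ ⟨ha'', hb'', h''⟩ d1 d2 d3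
    have e1 := cc_eq hn hH hy he (2 * k) (2 * k) (by omega) (by omega)
      (hgap _ (by omega) (by omega)) (hgap _ (by omega) (by omega))
    have e2 := cc_F_diag hn (2 * k) (by omega)
    have e3 : 2 < (cc H (2 * k) (2 * k)).card := by
      rw [Finset.two_lt_card]
      refine ⟨_, hmemcc ha hb h (by omega) (by omega), _, hmemcc ha' hb' h' (by omega) (by omega),
        _, hmemcc ha'' hb'' h'' (by omega) (by omega), ?_, ?_, ?_⟩ <;>
      · simp only [Ne, Prod.ext_iff, Fin.ext_iff]
        omega
    omega
  · intro A w u v hw hu hv h1 h2 h3 h4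
    obtain ⟨p, q, hp, hq, hqw, h⟩ := hH {p | A p.val} ⟨w, hw⟩ ⟨u, hu⟩ ⟨v, hv⟩ h1 h2 h3
      (by rw [Ne, Fin.ext_iff]; exact h4)
    exact ⟨p, q, hp, hq, fun e => hqw (Fin.ext e), p.2, q.2, h⟩
  · rintro a ⟨ha, hb, h⟩
    exact h.ne rfl

lemma sandwich {m : ℕ} (hm : 2 ≤ m) {H : SimpleGraph (Fin (2 * m + 1))} (hH : CutProp H)
    {y : Fin (2 * m + 1) → ℝ} (hy : Monotone y) (hs : ∑ v, y v = 0)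
    (he : en H y / 2 = algCon (SimpleGraph.cycleGraph (2 * m + 1)) * ∑ v, (y v) ^ 2) :
    en (Fg (2 * m + 1)) y / 2 = en H y / 2 := by
  have h1 := en_ge (by omega) hH hy
  have h2 := Fg_min ⟨m, rfl⟩ (by omega) y hs
  linarith

lemma concl_fin {m : ℕ} (hm : 2 ≤ m) {H : SimpleGraph (Fin (2 * m + 1))} (hH : CutProp H)
    {y : Fin (2 * m + 1) → ℝ} (hy : Monotone y) (h0 : y ≠ 0) (hs : ∑ v, y v = 0)
    (he : en H y / 2 = algCon (SimpleGraph.cycleGraph (2 * m + 1)) * ∑ v, (y v) ^ 2) :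
    Concl H (2 * m + 1) := by
  have h1 := sandwich hm hH hy hs he
  rcases gap_dichotomy (by omega) _ y hy h0 hs (h1.trans he) (Fg_min ⟨m, rfl⟩ (by omega))
    with h | h
  · exact concl_of_gaps hm hH hy h1 h
  · set H' : SimpleGraph (Fin (2 * m + 1)) := H.comap Fin.rev with hH'
    set y' : Fin (2 * m + 1) → ℝ := fun i => - y (Fin.rev i) with hy'
    have hadj : ∀ u v, H.Adj (Fin.revPerm u) (Fin.revPerm v) ↔ H'.Adj u v := fun u v => Iff.rfl
    have hc' : CutProp H' := cutProp_equiv Fin.revPerm hadj hH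
    have hm' : Monotone y' := fun a b hab => neg_le_neg (hy (Fin.rev_le_rev.2 hab))
    have hs' : ∑ v, y' v = 0 := by
      rw [hy', Finset.sum_neg_distrib, neg_eq_zero, ← hs]
      exact Equiv.sum_comp Fin.revPerm y
    have hsq' : ∑ v, (y' v) ^ 2 = ∑ v, (y v) ^ 2 := by
      simp only [hy', neg_sq]
      exact Equiv.sum_comp Fin.revPerm (fun v => (y v) ^ 2)
    have hen' : en H' y' = en H y := by
      rw [en_equiv H' H Fin.revPerm hadj]
      have : y' = (-1 : ℝ) • (y ∘ Fin.revPerm) := by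
        funext i; simp [hy']
      rw [this, en_smul]; norm_num
    have h1' := sandwich hm hc' hm' hs' (by rw [hen', hsq', he])
    refine Concl.transfer (RelIso.symm ⟨Fin.revPerm, fun {u v} => hadj u v⟩)
      (concl_of_gaps hm hc' hm' h1' ?_)
    intro g hg hg2
    have := h (2 * m + 1 - 2 - g) (by omega) (by omega)
    unfold gap at this ⊢
    rw [extN_mk y _ (by omega), extN_mk y _ (by omega)] at this
    rw [extN_mk y' _ (by omega), extN_mk y' _ (by omega)]
    simp only [hy']
    have e1 : Fin.rev (⟨g + 1, by omega⟩ : Fin (2 * m + 1)) = ⟨2 * m + 1 - 2 - g, by omega⟩ := by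
      rw [Fin.ext_iff, Fin.val_rev]; simp only; omega
    have e2 : Fin.rev (⟨g, by omega⟩ : Fin (2 * m + 1)) = ⟨2 * m + 1 - 2 - g + 1, by omega⟩ := by
      rw [Fin.ext_iff, Fin.val_rev]; simp only; omega
    rw [e1, e2]
    linarith

theorem twoConnected_odd_equality_characterization
    {V : Type*} [Fintype V] [DecidableEq V] {n : ℕ}
    (G : SimpleGraph V) (hcard : Fintype.card V = n) (hodd : Odd n) (hn : 5 ≤ n)
    (hG : TwoConnected G) (heq : algCon G = algCon (SimpleGraph.cycleGraph n)) :
    Nonempty (G ≃g SimpleGraph.cycleGraph n) ∨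
      ∃ (k : ℕ) (i : Fin k → ℕ), 1 ≤ k ∧ Monotone i ∧
        (∀ j, 1 ≤ i j ∧ i j ≤ (n - 3) / 2) ∧ Nonempty (G ≃g H12 n k i) := by
  obtain ⟨m, rfl⟩ := hodd
  show Concl G (2 * m + 1)
  obtain ⟨x, hx0, hxs, hxe⟩ := exists_min G hG.1
  let e0 : Fin (2 * m + 1) ≃ V := (Fintype.equivFinOfCardEq hcard).symm
  let e : Fin (2 * m + 1) ≃ V := (Tuple.sort (x ∘ e0)).trans e0
  have hadj : ∀ u v, G.Adj (e u) (e v) ↔ (G.comap e).Adj u v := fun u v => Iff.rfl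
  refine Concl.transfer (RelIso.symm ⟨e, fun {u v} => hadj u v⟩)
    (concl_fin (by omega) (cutProp_equiv e hadj (cutProp_of hG)) (y := x ∘ e) ?_ ?_ ?_ ?_)
  · exact Tuple.monotone_sort (x ∘ e0)
  · intro h
    apply hx0
    funext v
    have := congrFun h (e.symm v)
    simpa using this
  · rw [← hxs]; exact e.sum_comp x
  · rw [← en_equiv _ _ e hadj, hxe, heq]
    congr 1
    exact (e.sum_comp (fun v => (x v) ^ 2)).symm
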